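/- Let A and B be RLTs whose roots a and b are both Bag nodes, with children subtrees A₁, …, A_m and B₁, …, B_n respectively, and let N = max(m, n). Define the N × N matrix Δ by Δ_{ij} = d(A_i, B_j) for 1 ≤ i ≤ m and 1 ≤ j ≤ n, Δ_{ij} = d(A_i, Λ) for 1 ≤ i ≤ m and n < j ≤ N, and Δ_{ij} = d(Λ, B_j) for m < i ≤ N and 1 ≤ j ≤ n. Then the edit distance satisfies d(A, B) = min over all permutations σ of {1, …, N} of Σ_{i=1}^{N} Δ_{i, σ(i)}. -/

import Mathlib

/- Formalization framework for "Tree edit distance for hierarchical data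
compatible with HMIL paradigm".

Rooted labeled trees (RLTs): `Value` leaves carry a label `l : L` with data type
`τ l : DT`; `Bag` nodes have an unordered finite collection of children
(represented by a `List` together with free, zero-cost permutation edit steps,
which realizes the multiset semantics); `Object` nodes have children indexed by
pairwise distinct string edge-labels (an association list with `Nodup` keys,
again with free reordering since it represents a finite map).  The empty tree Λ
is represented by `none : OTree L`. -/

namespace TED

inductive PreRLT (L : Type) : Type where
  | value : L → PreRLT L
  | bag   : List (PreRLT L) → PreRLT L
  | obj   : List (String × PreRLT L) → PreRLT L

namespace PreRLT

variable {L DT : Type}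

/-- Node types ν: Value, Bag, Object. -/
inductive NT : Type where
  | value | bag | obj
deriving DecidableEq

/-- The kind of a node: its node type together with its label (Bag and Object
nodes implicitly carry the null label). -/
inductive NodeKind (L : Type) : Type where
  | value : L → NodeKind L
  | bag : NodeKind L
  | obj : NodeKind L

def nt : PreRLT L → NT
  | .value _ => .value
  | .bag _ => .bag
  | .obj _ => .obj

def kind : PreRLT L → NodeKind L
  | .value l => .value l
  | .bag _ => .bag
  | .obj _ => .obj

def children : PreRLT L → List (PreRLT L)
  | .value _ => []
  | .bag cs => cs
  | .obj cs => cs.map Prod.snd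

/-- A leaf is a node with no children (a Value node, an empty Bag or an empty
Object). -/
def IsLeaf (t : PreRLT L) : Prop := t.children = []

/-- Well-formedness: the edge labels of every Object node are pairwise
distinct. -/
inductive WF : PreRLT L → Prop where
  | value (l : L) : WF (.value l)
  | bag {cs : List (PreRLT L)} : (∀ c ∈ cs, WF c) → WF (.bag cs)
  | obj {cs : List (String × PreRLT L)} :
      (cs.map Prod.fst).Nodup → (∀ p ∈ cs, WF p.2) → WF (.obj cs)

end PreRLT

open PreRLT

/-- Possibly empty rooted labeled tree; `none` is the empty tree Λ. -/
abbrev OTree (L : Type) := Option (PreRLT L)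

def WFO {L : Type} : OTree L → Prop
  | none => True
  | some t => t.WF

/-- The cost function γ.  `rel l l'` is the cost of relabeling a Value node
(used only when `τ l = τ l'`), and `del k` is the cost γ(v, λ) of deleting a
node of kind `k`; insertion cost γ(λ, v) equals the deletion cost γ(v, λ).
γ is a metric on labels of equal data type. -/
structure Cost (L DT : Type) (τ : L → DT) where
  rel : L → L → ℝ
  del : PreRLT.NodeKind L → ℝ
  del_nonneg : ∀ k, 0 ≤ del k
  rel_self : ∀ l, rel l l = 0
  rel_indisc : ∀ l l', τ l = τ l' → rel l l' = 0 → l = l'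
  rel_symm : ∀ l l', rel l l' = rel l' l
  rel_triangle : ∀ l₁ l₂ l₃, τ l₁ = τ l₂ → τ l₂ = τ l₃ →
      rel l₁ l₃ ≤ rel l₁ l₂ + rel l₂ l₃

variable {L DT : Type} {τ : L → DT}

/-- Schema-preserving edit steps on nonempty trees: relabel a Value node to a
label of the same data type, delete a leaf, insert a leaf (at an Object node
only with a fresh edge label).  The `bagPerm`/`objPerm` steps are invisible,
zero-cost reorderings of the list representation of the unordered children
collections. -/
inductive Estep (τ : L → DT) : PreRLT L → PreRLT L → Type where
  | relabel (l l' : L) (h : τ l = τ l') : Estep τ (.value l) (.value l')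
  | bagPerm (cs : List (PreRLT L)) (σ : Equiv.Perm (Fin cs.length)) :
      Estep τ (.bag cs) (.bag (List.ofFn fun i => cs.get (σ i)))
  | objPerm (cs : List (String × PreRLT L)) (σ : Equiv.Perm (Fin cs.length)) :
      Estep τ (.obj cs) (.obj (List.ofFn fun i => cs.get (σ i)))
  | bagCongr (pre post : List (PreRLT L)) {t t' : PreRLT L} (e : Estep τ t t') :
      Estep τ (.bag (pre ++ t :: post)) (.bag (pre ++ t' :: post))
  | objCongr (pre post : List (String × PreRLT L)) (k : String) {t t' : PreRLT L}
      (e : Estep τ t t') :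
      Estep τ (.obj (pre ++ (k, t) :: post)) (.obj (pre ++ (k, t') :: post))
  | bagDel (cs : List (PreRLT L)) (t : PreRLT L) (h : t.IsLeaf) :
      Estep τ (.bag (t :: cs)) (.bag cs)
  | bagIns (cs : List (PreRLT L)) (t : PreRLT L) (h : t.IsLeaf) :
      Estep τ (.bag cs) (.bag (t :: cs))
  | objDel (cs : List (String × PreRLT L)) (k : String) (t : PreRLT L) (h : t.IsLeaf) :
      Estep τ (.obj ((k, t) :: cs)) (.obj cs)
  | objIns (cs : List (String × PreRLT L)) (k : String) (t : PreRLT L) (h : t.IsLeaf)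
      (hk : k ∉ cs.map Prod.fst) :
      Estep τ (.obj cs) (.obj ((k, t) :: cs))

/-- Cost of a single edit step. -/
def Estep.cost (C : Cost L DT τ) : {t t' : PreRLT L} → Estep τ t t' → ℝ
  | _, _, .relabel l l' _ => C.rel l l'
  | _, _, .bagPerm _ _ => 0
  | _, _, .objPerm _ _ => 0
  | _, _, .bagCongr _ _ e => e.cost C
  | _, _, .objCongr _ _ _ e => e.cost C
  | _, _, .bagDel _ t _ => C.del t.kind
  | _, _, .bagIns _ t _ => C.del t.kind
  | _, _, .objDel _ _ t _ => C.del t.kind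
  | _, _, .objIns _ _ t _ _ => C.del t.kind

/-- Edit steps on possibly empty trees: the root leaf may be deleted, and a
root leaf may be inserted into the empty tree. -/
inductive EstepO (τ : L → DT) : OTree L → OTree L → Type where
  | inner {t t' : PreRLT L} (e : Estep τ t t') : EstepO τ (some t) (some t')
  | delRoot (t : PreRLT L) (h : t.IsLeaf) : EstepO τ (some t) none
  | insRoot (t : PreRLT L) (h : t.IsLeaf) : EstepO τ none (some t)

def EstepO.cost (C : Cost L DT τ) : {T T' : OTree L} → EstepO τ T T' → ℝ
  | _, _, .inner e => e.cost C
  | _, _, .delRoot t _ => C.del t.kind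
  | _, _, .insRoot t _ => C.del t.kind

/-- An edit sequence S = s₁ ∘ ⋯ ∘ s_k transforming one tree into another. -/
inductive Eseq (τ : L → DT) : OTree L → OTree L → Type where
  | nil (T : OTree L) : Eseq τ T T
  | cons {T T' T'' : OTree L} (s : EstepO τ T T') (S : Eseq τ T' T'') : Eseq τ T T''

/-- γ(S), the total cost of an edit sequence. -/
def Eseq.cost (C : Cost L DT τ) : {T T' : OTree L} → Eseq τ T T' → ℝ
  | _, _, .nil _ => 0
  | _, _, .cons s S => s.cost C + S.cost C

/-- The tree edit distance d(T, T'): the minimum of γ(S) over all edit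
sequences S transforming T into T'. -/
noncomputable def editDist (C : Cost L DT τ) (T T' : OTree L) : ℝ :=
  sInf {c : ℝ | ∃ S : Eseq τ T T', S.cost C = c}

end TED
namespace TED

open PreRLT

variable {L DT : Type} {τ : L → DT}

/-- Addresses of nodes in a tree: a child of a Bag node is addressed by its
position, a child of an Object node by its edge label. -/
inductive Pstep : Type where
  | idx : ℕ → Pstep
  | key : String → Pstep
deriving DecidableEq

abbrev Path := List Pstep

/-- The subtree rooted at the node addressed by a path, if it exists. -/
def subAt : Path → PreRLT L → Option (PreRLT L)
  | [], t => some t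
  | .idx n :: p, .bag cs => cs[n]?.bind (subAt p)
  | .key k :: p, .obj cs => (List.lookup k cs).bind (subAt p)
  | _, _ => none

def subAtO (T : OTree L) (p : Path) : Option (PreRLT L) :=
  T.bind (fun t => subAt p t)

/-- `p` addresses a node of `T`. -/
def IsNode (T : OTree L) (p : Path) : Prop := (subAtO T p).isSome

/-- Two nodes have the same node type and, for Value nodes, the same data
type. -/
def SameTypePair (τ : L → DT) (t₁ t₂ : PreRLT L) : Prop :=
  t₁.nt = t₂.nt ∧ ∀ l₁ l₂, t₁ = .value l₁ → t₂ = .value l₂ → τ l₁ = τ l₂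

/-- `q` addresses a (proper) descendant of the node addressed by `p`. -/
def IsDesc (p q : Path) : Prop := p <+: q ∧ q ≠ p

/-- An edit distance mapping (M, T₁, T₂). -/
structure IsMapping (τ : L → DT) (T₁ T₂ : OTree L) (M : Set (Path × Path)) : Prop where
  /-- pairs consist of a node of T₁ and a node of T₂ -/
  nodes : ∀ pq ∈ M, IsNode T₁ pq.1 ∧ IsNode T₂ pq.2
  /-- paired nodes have the same node type and, for Value nodes, data type -/
  types : ∀ pq ∈ M, ∃ t₁ t₂, subAtO T₁ pq.1 = some t₁ ∧ subAtO T₂ pq.2 = some t₂ ∧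
      SameTypePair τ t₁ t₂
  /-- the mapping is one-to-one -/
  one_to_one : ∀ pq ∈ M, ∀ pq' ∈ M, ((pq : Path × Path).1 = (pq' : Path × Path).1 ↔
      (pq : Path × Path).2 = (pq' : Path × Path).2)
  /-- parents of non-root paired nodes are paired as well -/
  parents : ∀ pq ∈ M, (pq : Path × Path).1 ≠ [] → (pq : Path × Path).2 ≠ [] →
      ((pq : Path × Path).1.dropLast, (pq : Path × Path).2.dropLast) ∈ M
  /-- if (v, w) ∉ M then no descendant of v is paired with a descendant of w -/
  desc : ∀ p q, (p, q) ∉ M → ∀ p' q', IsDesc p p' → IsDesc q q' → (p', q') ∉ M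
  /-- paired children of Object nodes are connected by equally labeled edges -/
  edge : ∀ pq ∈ M, ∀ t : PreRLT L, (pq : Path × Path).1 ≠ [] →
      subAtO T₁ (pq : Path × Path).1.dropLast = some t → t.nt = .obj →
      (pq : Path × Path).1.getLast? = (pq : Path × Path).2.getLast?

/-- γ(v → w) for a pair of mapped nodes: the relabeling cost for Value nodes,
and 0 for the (null-labeled) inner nodes. -/
noncomputable def pairCost (C : Cost L DT τ) (T₁ T₂ : OTree L) (p q : Path) : ℝ :=
  match subAtO T₁ p, subAtO T₂ q with
  | some (.value l₁), some (.value l₂) => C.rel l₁ l₂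
  | _, _ => 0

/-- γ(v, λ), the deletion (= insertion) cost of the node of `T` at `p`. -/
noncomputable def delCost (C : Cost L DT τ) (T : OTree L) (p : Path) : ℝ :=
  match subAtO T p with
  | some t => C.del t.kind
  | none => 0

/-- γ(M) = Σ_{(v,w)∈M} γ(v,w) + Σ_{v∈N₁} γ(v,λ) + Σ_{w∈N₂} γ(λ,w), where N₁, N₂
are the nodes of T₁, T₂ not occurring in M. -/
noncomputable def mapCost (C : Cost L DT τ) (T₁ T₂ : OTree L)
    (M : Set (Path × Path)) : ℝ :=
  (∑ᶠ pq ∈ M, pairCost C T₁ T₂ (pq : Path × Path).1 (pq : Path × Path).2)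
    + (∑ᶠ p ∈ {p : Path | IsNode T₁ p ∧ ∀ q, (p, q) ∉ M}, delCost C T₁ p)
    + (∑ᶠ q ∈ {q : Path | IsNode T₂ q ∧ ∀ p, (p, q) ∉ M}, delCost C T₂ q)

/-- How a single edit step moves node addresses: `e.pmap p = some q` iff the
node at `p` persists through `e` (possibly relabeled) as the node at `q`. -/
def Estep.pmap : {t t' : PreRLT L} → Estep τ t t' → Path → Option Path
  | _, _, .relabel _ _ _, [] => some []
  | _, _, .relabel _ _ _, _ :: _ => none
  | _, _, .bagPerm _ _, [] => some []
  | _, _, .bagPerm cs σ, .idx i :: p =>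
      if h : i < cs.length then some (.idx (σ.symm ⟨i, h⟩).val :: p) else none
  | _, _, .bagPerm _ _, .key _ :: _ => none
  | _, _, .objPerm _ _, [] => some []
  | _, _, .objPerm _ _, .key k :: p => some (.key k :: p)
  | _, _, .objPerm _ _, .idx _ :: _ => none
  | _, _, .bagCongr _ _ _, [] => some []
  | _, _, .bagCongr pre _ e, .idx i :: p =>
      if i = pre.length then (e.pmap p).map (fun q => .idx i :: q)
      else some (.idx i :: p)
  | _, _, .bagCongr _ _ _, .key _ :: _ => none
  | _, _, .objCongr _ _ _ _, [] => some []
  | _, _, .objCongr _ _ k e, .key k' :: p =>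
      if k' = k then (e.pmap p).map (fun q => .key k :: q)
      else some (.key k' :: p)
  | _, _, .objCongr _ _ _ _, .idx _ :: _ => none
  | _, _, .bagDel _ _ _, [] => some []
  | _, _, .bagDel _ _ _, .idx 0 :: _ => none
  | _, _, .bagDel _ _ _, .idx (i + 1) :: p => some (.idx i :: p)
  | _, _, .bagDel _ _ _, .key _ :: _ => none
  | _, _, .bagIns _ _ _, [] => some []
  | _, _, .bagIns _ _ _, .idx i :: p => some (.idx (i + 1) :: p)
  | _, _, .bagIns _ _ _, .key _ :: _ => none
  | _, _, .objDel _ k _ _, [] => some []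
  | _, _, .objDel _ k _ _, .key k' :: p =>
      if k' = k then none else some (.key k' :: p)
  | _, _, .objDel _ _ _ _, .idx _ :: _ => none
  | _, _, .objIns _ k _ _ _, [] => some []
  | _, _, .objIns _ k _ _ _, .key k' :: p =>
      if k' = k then none else some (.key k' :: p)
  | _, _, .objIns _ _ _ _ _, .idx _ :: _ => none

def EstepO.pmap : {T T' : OTree L} → EstepO τ T T' → Path → Option Path
  | _, _, .inner e => e.pmap
  | _, _, .delRoot _ _ => fun _ => none
  | _, _, .insRoot _ _ => fun _ => none

/-- How an edit sequence moves node addresses, by composition. -/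
def Eseq.pmap : {T T' : OTree L} → Eseq τ T T' → Path → Option Path
  | _, _, .nil _ => fun p => some p
  | _, _, .cons s S => fun p => (s.pmap p).bind S.pmap

/-- The mapping (M, T₁, T₂) induced by an edit sequence S : T₁ → T₂, pairing
each node of T₁ that persists (possibly relabeled) through S with its image in
T₂. -/
def Eseq.induced {T₁ T₂ : OTree L} (S : Eseq τ T₁ T₂) : Set (Path × Path) :=
  {pq | IsNode T₁ pq.1 ∧ S.pmap pq.1 = some pq.2}

/-- The sum Σ_v γ(v, λ) of the deletion (equivalently, insertion) costs over
all nodes of a tree. -/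
noncomputable def delSum (C : Cost L DT τ) : PreRLT L → ℝ
  | .value l => C.del (.value l)
  | .bag cs => C.del .bag + (cs.attach.map (fun c => delSum C c.1)).sum
  | .obj cs => C.del .obj + (cs.attach.map (fun c => delSum C c.1.2)).sum
  termination_by t => sizeOf t
  decreasing_by
  · have := List.sizeOf_lt_of_mem c.2
    simp only [PreRLT.bag.sizeOf_spec]
    omega
  · have h1 := List.sizeOf_lt_of_mem c.2
    have h2 : sizeOf c.1.2 < sizeOf c.1 := by
      obtain ⟨a, b⟩ := c.1
      simp [Prod.mk.sizeOf_spec]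
    simp only [PreRLT.obj.sizeOf_spec]
    omega

/-- Equality of trees under the multiset semantics of Bag children and the
finite-map semantics of Object children. -/
inductive TEquiv : PreRLT L → PreRLT L → Prop where
  | value (l : L) : TEquiv (.value l) (.value l)
  | bag {cs cs' : List (PreRLT L)} (l : List (PreRLT L × PreRLT L))
      (h₁ : l.map Prod.fst = cs) (h₂ : (l.map Prod.snd).Perm cs')
      (h₃ : ∀ pq ∈ l, TEquiv pq.1 pq.2) :
      TEquiv (.bag cs) (.bag cs')
  | obj {cs cs' : List (String × PreRLT L)}
      (l : List ((String × PreRLT L) × (String × PreRLT L)))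
      (h₁ : l.map Prod.fst = cs) (h₂ : (l.map Prod.snd).Perm cs')
      (hk : ∀ pq ∈ l, pq.1.1 = pq.2.1)
      (h₃ : ∀ pq ∈ l, TEquiv pq.1.2 pq.2.2) :
      TEquiv (.obj cs) (.obj cs')

/-- Equality of possibly empty trees under the multiset semantics. -/
def OEquiv : OTree L → OTree L → Prop
  | none, none => True
  | some t, some t' => TEquiv t t'
  | _, _ => False

end TED

/-!
An edit step on a tree with Bag root either leaves the multiset of its children unchanged or acts as
one edit step of the same cost on a single, possibly empty, child. Following each child separately,
an edit sequence from `A` to `B` splits into edit sequences between children of `A` and children of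
`B`, where `Λ` takes the place of a missing partner. Conversely, edit sequences between paired
children can be performed one after another inside the bag. Hence `d(A, B)` is the least cost of a
partial matching of the children. Two unmatched children, one on each side, may be matched at no
extra cost by the triangle inequality through `Λ`, so it suffices to consider matchings with
`max m n` pairs, that is, permutations.
-/

namespace TED

open PreRLT

section Multiset

variable {ι α β : Type*}

theorem exists_perm_eq_comp [Fintype ι] {f g : ι → β}
    (h : (Finset.univ : Finset ι).val.map f = Finset.univ.val.map g) :
    ∃ σ : Equiv.Perm ι, f = g ∘ σ := by
  classical
  have card_fiber (b : β) : Fintype.card {i // f i = b} = Fintype.card {i // g i = b} := by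
    have hcount := congrArg (Multiset.count b) h
    simp only [Multiset.count_map, eq_comm (a := b)] at hcount
    simpa only [Fintype.card_subtype, Finset.card_def, Finset.filter_val] using hcount
  let e (b : β) : {i // f i = b} ≃ {i // g i = b} := Fintype.equivOfCardEq (card_fiber b)
  exact ⟨Equiv.ofFiberEquiv e, funext fun i => (Equiv.ofFiberEquiv_map e i).symm⟩

theorem exists_eq_map_univ_fin {n : ℕ} {s : Multiset α} (h : s.card = n) :
    ∃ f : Fin n → α, s = Finset.univ.val.map f := by
  obtain ⟨l, rfl⟩ : ∃ l : List α, s = l := ⟨_, s.coe_toList.symm⟩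
  obtain rfl : l.length = n := h
  exact ⟨l.get, by rw [Fin.univ_val_map, List.ofFn_get]⟩

theorem exists_perm_ofFn_get_eq {l l' : List α} (h : l.Perm l') :
    ∃ σ : Equiv.Perm (Fin l.length), List.ofFn (fun i => l.get (σ i)) = l' := by
  obtain ⟨f, hf⟩ : ∃ f : Fin l.length → α, List.ofFn f = l' := by
    rw [h.length_eq]
    exact ⟨l'.get, List.ofFn_get l'⟩
  obtain ⟨σ, rfl⟩ := exists_perm_eq_comp (f := f) (g := l.get) (by
    simpa [hf] using h.symm)
  exact ⟨σ, hf⟩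

theorem filterMap_cons_toList (f : α → Option β) (a : α) (s : Multiset α) :
    (a ::ₘ s).filterMap f = ((f a).toList : Multiset β) + s.filterMap f := by
  cases h : f a <;> simp [h]

theorem card_filterMap_lt_iff {f : α → Option β} {s : Multiset α} :
    (s.filterMap f).card < s.card ↔ ∃ a ∈ s, f a = none := by
  obtain ⟨l, rfl⟩ : ∃ l : List α, s = l := ⟨_, s.coe_toList.symm⟩
  simp

theorem exists_map_some_add_replicate_none (s : Multiset (Option α)) :
    ∃ k, s = (s.filterMap id).map some + Multiset.replicate k none := by
  induction s using Multiset.induction with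
  | empty => exact ⟨0, rfl⟩
  | cons x s ih =>
    obtain ⟨k, hk⟩ := ih
    cases x with
    | none =>
      refine ⟨k + 1, ?_⟩
      rw [Multiset.filterMap_cons_none none s rfl, Multiset.replicate_succ, Multiset.add_cons, ← hk]
    | some a =>
      refine ⟨k, ?_⟩
      rw [Multiset.filterMap_cons_some id _ s rfl, Multiset.map_cons, Multiset.cons_add, ← hk]

theorem eq_of_filterMap_id_eq {s t : Multiset (Option α)}
    (h : s.filterMap id = t.filterMap id) (hcard : s.card = t.card) : s = t := by
  obtain ⟨j, hj⟩ := exists_map_some_add_replicate_none s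
  obtain ⟨k, hk⟩ := exists_map_some_add_replicate_none t
  rw [h] at hj
  have hjk : j = k := by
    have hs := congrArg Multiset.card hj
    have ht := congrArg Multiset.card hk
    simp only [Multiset.card_add, Multiset.card_replicate] at hs ht
    omega
  rw [hj, hjk, ← hk]

theorem filterMap_getElem?_univ {l : List α} {n : ℕ} (h : l.length ≤ n) :
    (Finset.univ : Finset (Fin n)).val.filterMap (fun i : Fin n => l[(i : ℕ)]?) = l := by
  induction l generalizing n with
  | nil => simp [Multiset.eq_zero_iff_forall_notMem]
  | cons a l ih =>
    obtain ⟨n, rfl⟩ := Nat.exists_eq_add_of_le' (Nat.zero_lt_of_lt h)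
    rw [Fin.univ_succ, Finset.cons_val,
      Multiset.filterMap_cons_some (fun i : Fin (n + 1) => (a :: l)[(i : ℕ)]?) 0 _ (b := a) rfl,
      Finset.map_val, Multiset.filterMap_map]
    exact congrArg (a ::ₘ ·) (ih (Nat.le_of_succ_le_succ h))

theorem map_univ_eq_map_getElem? {l : List α} {n : ℕ} {f : Fin n → Option α}
    (hf : (Finset.univ : Finset (Fin n)).val.filterMap f = l) (h : l.length ≤ n) :
    (Finset.univ : Finset (Fin n)).val.map f =
      Finset.univ.val.map fun i : Fin n => l[(i : ℕ)]? := by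
  refine eq_of_filterMap_id_eq ?_ (by simp)
  rw [Multiset.filterMap_map, Multiset.filterMap_map]
  exact hf.trans (filterMap_getElem?_univ h).symm

end Multiset

section Matching

variable {α β R : Type*} {s : Multiset α} {t : Multiset β} {M : Multiset (Option α × Option β)}

/-- Partial matchings between two multisets: each pair of `M` consists of two matched elements, or
of an unmatched element and `none`. Pairs `(none, none)` are allowed, as padding. -/
structure IsMatching (M : Multiset (Option α × Option β)) (s : Multiset α) (t : Multiset β) :
    Prop where
  filterMap_fst : M.filterMap Prod.fst = s
  filterMap_snd : M.filterMap Prod.snd = t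

namespace IsMatching

theorem cons_iff {x : Option α} {y : Option β} :
    IsMatching ((x, y) ::ₘ M) s t ↔
      ∃ s' t', IsMatching M s' t' ∧ s = x.toList + s' ∧ t = y.toList + t' := by
  constructor
  · rintro ⟨rfl, rfl⟩
    exact ⟨_, _, ⟨rfl, rfl⟩, filterMap_cons_toList _ _ _, filterMap_cons_toList _ _ _⟩
  · rintro ⟨s', t', ⟨rfl, rfl⟩, rfl, rfl⟩
    exact ⟨filterMap_cons_toList _ _ _, filterMap_cons_toList _ _ _⟩

theorem none_none_cons_iff : IsMatching ((none, none) ::ₘ M) s t ↔ IsMatching M s t := by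
  simp [cons_iff]

theorem replicate_none_none_add_iff {k : ℕ} :
    IsMatching (Multiset.replicate k (none, none) + M) s t ↔ IsMatching M s t := by
  induction k with
  | zero => simp
  | succ k ih => rw [Multiset.replicate_succ, Multiset.cons_add, none_none_cons_iff, ih]

theorem of_perm {as : List α} {bs : List β} {n : ℕ} (has : as.length ≤ n) (hbs : bs.length ≤ n)
    (σ : Equiv.Perm (Fin n)) :
    IsMatching (Finset.univ.val.map fun i : Fin n => (as[(i : ℕ)]?, bs[(σ i : ℕ)]?)) as bs where
  filterMap_fst := by
    rw [Multiset.filterMap_map]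
    exact filterMap_getElem?_univ has
  filterMap_snd := by
    refine Eq.trans ?_ (filterMap_getElem?_univ hbs)
    conv_rhs => rw [← Multiset.map_univ_val_equiv σ, Multiset.filterMap_map]
    rw [Multiset.filterMap_map]
    rfl

theorem exists_perm {as : List α} {bs : List β} {n : ℕ} (hM : IsMatching M as bs)
    (has : as.length ≤ n) (hbs : bs.length ≤ n) (hcard : M.card = n) :
    ∃ σ : Equiv.Perm (Fin n),
      M = Finset.univ.val.map fun i : Fin n => (as[(i : ℕ)]?, bs[(σ i : ℕ)]?) := by
  obtain ⟨f, rfl⟩ := exists_eq_map_univ_fin hcard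
  obtain ⟨hfst, hsnd⟩ := hM
  rw [Multiset.filterMap_map] at hfst hsnd
  obtain ⟨σ, hσ⟩ := exists_perm_eq_comp (map_univ_eq_map_getElem? hfst has)
  obtain ⟨ρ, hρ⟩ := exists_perm_eq_comp (map_univ_eq_map_getElem? hsnd hbs)
  refine ⟨ρ * σ⁻¹, ?_⟩
  conv_rhs => rw [← Multiset.map_univ_val_equiv σ, Multiset.map_map]
  refine Multiset.map_congr rfl fun i _ => Prod.ext (congrFun hσ i) ?_
  simpa using congrFun hρ i

end IsMatching

/-- The cost of a matching for a cost function `d` on pairs; `d a none` and `d none b` are the costs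
of leaving `a` and `b` unmatched. -/
def matchCost [AddCommMonoid R] (d : Option α → Option β → R)
    (M : Multiset (Option α × Option β)) : R :=
  (M.map fun p => d p.1 p.2).sum

theorem matchCost_cons [AddCommMonoid R] (d : Option α → Option β → R) (x : Option α)
    (y : Option β) (M : Multiset (Option α × Option β)) :
    matchCost d ((x, y) ::ₘ M) = d x y + matchCost d M := by
  simp [matchCost]

theorem matchCost_map_univ {ι : Type*} [Fintype ι] [AddCommMonoid R]
    (d : Option α → Option β → R) (f : ι → Option α × Option β) :
    matchCost d (Finset.univ.val.map f) = ∑ i, d (f i).1 (f i).2 := by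
  rw [matchCost, Multiset.map_map]
  rfl

namespace IsMatching

variable [AddCommMonoid R] {d : Option α → Option β → R}

theorem exists_cons_matchCost_eq {y : Option α} (hM : IsMatching M (y.toList + s) t)
    (hnone : d none none = 0) :
    ∃ z M', IsMatching ((y, z) ::ₘ M') (y.toList + s) t ∧
      (∀ p ∈ (y, z) ::ₘ M', p ∈ M ∨ p = (none, none)) ∧
      matchCost d ((y, z) ::ₘ M') = matchCost d M := by
  cases y with
  | none =>
    exact ⟨none, M, none_none_cons_iff.2 hM, fun p hp => (Multiset.mem_cons.1 hp).symm,
      by simp [matchCost_cons, hnone]⟩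
  | some a =>
    have ha : a ∈ M.filterMap Prod.fst := by simp [hM.filterMap_fst]
    obtain ⟨⟨_, z⟩, hmem, rfl⟩ := (Multiset.mem_filterMap _ _).1 ha
    obtain ⟨M, rfl⟩ := Multiset.exists_cons_of_mem hmem
    exact ⟨z, M, hM, fun p hp => Or.inl hp, rfl⟩

variable [PartialOrder R] [IsOrderedAddMonoid R]

theorem exists_card_succ_eq (hM : IsMatching M s t) (hnone : d none none = 0)
    (htri : ∀ a ∈ s, ∀ b ∈ t, d (some a) (some b) ≤ d (some a) none + d none (some b))
    (hs : s.card < M.card) (ht : t.card < M.card) :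
    ∃ M', IsMatching M' s t ∧ M'.card + 1 = M.card ∧ matchCost d M' ≤ matchCost d M := by
  by_cases hmem : (none, none) ∈ M
  · obtain ⟨M, rfl⟩ := Multiset.exists_cons_of_mem hmem
    exact ⟨M, none_none_cons_iff.1 hM, by simp, by simp [matchCost_cons, hnone]⟩
  rw [← hM.filterMap_fst, card_filterMap_lt_iff] at hs
  rw [← hM.filterMap_snd, card_filterMap_lt_iff] at ht
  obtain ⟨⟨x, y⟩, hxy, rfl : x = none⟩ := hs
  obtain ⟨⟨x', y'⟩, hxy', rfl : y' = none⟩ := ht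
  obtain ⟨b, rfl⟩ : ∃ b, y = some b := Option.ne_none_iff_exists'.1 fun h => hmem (h ▸ hxy)
  obtain ⟨a, rfl⟩ : ∃ a, x' = some a := Option.ne_none_iff_exists'.1 fun h => hmem (h ▸ hxy')
  obtain ⟨M, rfl⟩ := Multiset.exists_cons_of_mem hxy
  obtain ⟨M, rfl⟩ := Multiset.exists_cons_of_mem
    ((Multiset.mem_cons.1 hxy').resolve_left (by simp))
  obtain ⟨_, _, hM', rfl, rfl⟩ := cons_iff.1 hM
  obtain ⟨s, t, hM'', rfl, rfl⟩ := cons_iff.1 hM'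
  refine ⟨(some a, some b) ::ₘ M, cons_iff.2 ⟨s, t, hM'', by simp, by simp⟩, by simp, ?_⟩
  simp only [matchCost_cons, ← add_assoc]
  rw [add_comm (d none _)]
  gcongr
  exact htri a (by simp) b (by simp)

theorem exists_card_eq {n : ℕ} (hM : IsMatching M s t) (hnone : d none none = 0)
    (htri : ∀ a ∈ s, ∀ b ∈ t, d (some a) (some b) ≤ d (some a) none + d none (some b))
    (hs : s.card ≤ n) (ht : t.card ≤ n) :
    ∃ M', IsMatching M' s t ∧ M'.card = n ∧ matchCost d M' ≤ matchCost d M := by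
  induction hk : M.card - n generalizing M with
  | zero =>
    obtain ⟨k, rfl⟩ := Nat.exists_eq_add_of_le (Nat.sub_eq_zero_iff_le.1 hk)
    exact ⟨Multiset.replicate k (none, none) + M, replicate_none_none_add_iff.2 hM,
      by simp [add_comm], by simp [matchCost, hnone]⟩
  | succ k ih =>
    obtain ⟨M₁, hM₁, hcard₁, hle₁⟩ := hM.exists_card_succ_eq hnone htri (by omega) (by omega)
    obtain ⟨M₂, hM₂, hcard₂, hle₂⟩ := ih hM₁ (by omega)
    exact ⟨M₂, hM₂, hcard₂, hle₂.trans hle₁⟩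

theorem exists_perm_sum_le {as : List α} {bs : List β} {n : ℕ} (hM : IsMatching M as bs)
    (hnone : d none none = 0)
    (htri : ∀ a ∈ as, ∀ b ∈ bs, d (some a) (some b) ≤ d (some a) none + d none (some b))
    (has : as.length ≤ n) (hbs : bs.length ≤ n) :
    ∃ σ : Equiv.Perm (Fin n),
      ∑ i : Fin n, d as[(i : ℕ)]? bs[(σ i : ℕ)]? ≤ matchCost d M := by
  obtain ⟨M', hM', hcard, hle⟩ := hM.exists_card_eq hnone (by simpa using htri) has hbs
  obtain ⟨σ, rfl⟩ := hM'.exists_perm has hbs hcard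
  exact ⟨σ, (matchCost_map_univ d _).symm.trans_le hle⟩

end IsMatching

end Matching

section EditSequence

variable {L DT : Type} {τ : L → DT} {t t' : PreRLT L} {T T' T'' : OTree L}

theorem Cost.rel_nonneg (C : Cost L DT τ) {l l' : L} (h : τ l = τ l') : 0 ≤ C.rel l l' := by
  have htri := C.rel_triangle l l' l h h.symm
  rw [C.rel_self, C.rel_symm l' l] at htri
  linarith

theorem Estep.cost_nonneg (C : Cost L DT τ) (s : Estep τ t t') : 0 ≤ s.cost C := by
  induction s with
  | relabel l l' h => exact C.rel_nonneg h
  | bagPerm | objPerm => exact le_rfl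
  | bagCongr _ _ _ ih | objCongr _ _ _ _ ih => exact ih
  | bagDel | bagIns | objDel | objIns => exact C.del_nonneg _

theorem EstepO.cost_nonneg (C : Cost L DT τ) (s : EstepO τ T T') : 0 ≤ s.cost C := by
  cases s with
  | inner e => exact e.cost_nonneg C
  | delRoot | insRoot => exact C.del_nonneg _

theorem Eseq.cost_nonneg (C : Cost L DT τ) (S : Eseq τ T T') : 0 ≤ S.cost C := by
  induction S with
  | nil => exact le_rfl
  | cons s S ih => exact add_nonneg (s.cost_nonneg C) ih

/-- The concatenation of two edit sequences. -/
def Eseq.append {T T' T'' : OTree L} : Eseq τ T T' → Eseq τ T' T'' → Eseq τ T T''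
  | .nil _, S' => S'
  | .cons s S, S' => .cons s (S.append S')

theorem Eseq.cost_append (C : Cost L DT τ) (S : Eseq τ T T') (S' : Eseq τ T' T'') :
    (S.append S').cost C = S.cost C + S'.cost C := by
  induction S with
  | nil => simp [append, cost]
  | cons s S ih => simp [append, cost, ih, add_assoc]

/-- The edit sequence obtained by performing an edit sequence inside a context `F`, where `f` says
how a single step acts inside the context. -/
def Eseq.lift (F : OTree L → PreRLT L)
    (f : ∀ {T T' : OTree L}, EstepO τ T T' → Estep τ (F T) (F T')) {T T' : OTree L} :
    Eseq τ T T' → Eseq τ (some (F T)) (some (F T'))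
  | .nil _ => .nil _
  | .cons s S => .cons (.inner (f s)) (S.lift F f)

/-- An edit step on a possibly empty tree, performed on a child of a Bag node. -/
def EstepO.inBag (post : List (PreRLT L)) {T T' : OTree L} :
    EstepO τ T T' → Estep τ (.bag (T.toList ++ post)) (.bag (T'.toList ++ post))
  | .inner e => .bagCongr [] post e
  | .delRoot t h => .bagDel post t h
  | .insRoot t h => .bagIns post t h

/-- An edit step on a possibly empty tree, performed on the child of an Object node at the edge
label `k`. -/
def EstepO.inObj (k : String) (post : List (String × PreRLT L)) (hk : k ∉ post.map Prod.fst)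
    {T T' : OTree L} : EstepO τ T T' → Estep τ
      (.obj ((T.map (Prod.mk k)).toList ++ post)) (.obj ((T'.map (Prod.mk k)).toList ++ post))
  | .inner e => .objCongr [] post k e
  | .delRoot t h => .objDel post k t h
  | .insRoot t h => .objIns post k t h hk

theorem Eseq.cost_lift_inBag (C : Cost L DT τ) (post : List (PreRLT L)) (S : Eseq τ T T') :
    (S.lift _ (EstepO.inBag post)).cost C = S.cost C := by
  induction S with
  | nil => rfl
  | cons s S ih =>
    have hs : (s.inBag post).cost C = s.cost C := by cases s <;> rfl
    exact congrArg₂ (· + ·) hs ih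

end EditSequence

section EditDist

variable {L DT : Type} {τ : L → DT} {T T' T'' : OTree L}

theorem editDist_le_cost (C : Cost L DT τ) (S : Eseq τ T T') : editDist C T T' ≤ S.cost C :=
  csInf_le ⟨0, by rintro _ ⟨S, rfl⟩; exact S.cost_nonneg C⟩ ⟨S, rfl⟩

theorem le_editDist {C : Cost L DT τ} [Nonempty (Eseq τ T T')] {c : ℝ}
    (h : ∀ S : Eseq τ T T', c ≤ S.cost C) : c ≤ editDist C T T' :=
  le_ciInf h

theorem editDist_self (C : Cost L DT τ) (T : OTree L) : editDist C T T = 0 :=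
  have : Nonempty (Eseq τ T T) := ⟨.nil T⟩
  le_antisymm (editDist_le_cost C (.nil T)) (le_editDist fun S => S.cost_nonneg C)

theorem editDist_triangle (C : Cost L DT τ) [Nonempty (Eseq τ T T')] [Nonempty (Eseq τ T' T'')] :
    editDist C T T'' ≤ editDist C T T' + editDist C T' T'' :=
  le_ciInf_add_ciInf fun S S' =>
    (editDist_le_cost C (S.append S')).trans_eq (S.cost_append C S')

end EditDist

section Reachability

variable {L DT : Type} {τ : L → DT} {T T' T'' : OTree L}

/-- Each of the two trees can be transformed into the other. -/
def Interreachable (τ : L → DT) (T T' : OTree L) : Prop :=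
  Nonempty (Eseq τ T T') ∧ Nonempty (Eseq τ T' T)

theorem Interreachable.symm (h : Interreachable τ T T') : Interreachable τ T' T :=
  And.symm h

theorem Interreachable.trans (h : Interreachable τ T T') (h' : Interreachable τ T' T'') :
    Interreachable τ T T'' :=
  ⟨h.1.map2 Eseq.append h'.1, h'.2.map2 Eseq.append h.2⟩

theorem Interreachable.lift (F : OTree L → PreRLT L)
    (f : ∀ {T T' : OTree L}, EstepO τ T T' → Estep τ (F T) (F T')) (h : Interreachable τ T T') :
    Interreachable τ (some (F T)) (some (F T')) :=
  h.imp (Nonempty.map (Eseq.lift F f)) (Nonempty.map (Eseq.lift F f))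

theorem PreRLT.IsLeaf.interreachable_none {t : PreRLT L} (h : t.IsLeaf) :
    Interreachable τ (some t) none :=
  ⟨⟨.cons (.delRoot t h) (.nil _)⟩, ⟨.cons (.insRoot t h) (.nil _)⟩⟩

theorem interreachable_bag_none {cs : List (PreRLT L)}
    (h : ∀ c ∈ cs, Interreachable τ (some c) none) :
    Interreachable τ (some (.bag cs)) none := by
  induction cs with
  | nil => exact IsLeaf.interreachable_none rfl
  | cons c cs ih =>
    obtain ⟨hc, hcs⟩ := List.forall_mem_cons.1 h
    exact (hc.lift _ (EstepO.inBag cs)).trans (ih hcs)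

theorem interreachable_obj_none {cs : List (String × PreRLT L)} (hnd : (cs.map Prod.fst).Nodup)
    (h : ∀ p ∈ cs, Interreachable τ (some p.2) none) :
    Interreachable τ (some (.obj cs)) none := by
  induction cs with
  | nil => exact IsLeaf.interreachable_none rfl
  | cons p cs ih =>
    obtain ⟨hp, hcs⟩ := List.forall_mem_cons.1 h
    obtain ⟨hk, hnd⟩ := List.nodup_cons.1 hnd
    exact (hp.lift _ (EstepO.inObj p.1 cs hk)).trans (ih hnd hcs)

theorem PreRLT.WF.interreachable_none {t : PreRLT L} (ht : t.WF) :
    Interreachable τ (some t) none := by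
  induction ht with
  | value => exact IsLeaf.interreachable_none rfl
  | bag _ ih => exact interreachable_bag_none ih
  | obj hnd _ ih => exact interreachable_obj_none hnd ih

theorem WFO.interreachable_none (hT : WFO T) : Interreachable τ T none := by
  cases T with
  | none => exact ⟨⟨.nil _⟩, ⟨.nil _⟩⟩
  | some t => exact PreRLT.WF.interreachable_none hT

theorem WFO.nonempty_eseq (hT : WFO T) (hT' : WFO T') : Nonempty (Eseq τ T T') :=
  (hT.interreachable_none.trans hT'.interreachable_none.symm).1

theorem wfo_getElem? {cs : List (PreRLT L)} (h : ∀ c ∈ cs, c.WF) (i : ℕ) : WFO cs[i]? := by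
  cases hi : cs[i]? with
  | none => trivial
  | some c => exact h c (List.mem_of_getElem? hi)

theorem WFO.editDist_le_add (C : Cost L DT τ) (hT : WFO T) (hT' : WFO T') :
    editDist C T T' ≤ editDist C T none + editDist C none T' :=
  have : Nonempty (Eseq τ T none) := hT.interreachable_none.1
  have : Nonempty (Eseq τ none T') := hT'.interreachable_none.2
  editDist_triangle C

end Reachability

section Bag

variable {L DT : Type} {τ : L → DT} {T T' : OTree L} {as bs : List (PreRLT L)}
  {M : Multiset (OTree L × OTree L)}

theorem exists_estep_bag_of_perm (C : Cost L DT τ) (h : as.Perm bs) :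
    ∃ s : Estep τ (.bag as) (.bag bs), s.cost C = 0 := by
  obtain ⟨σ, rfl⟩ := exists_perm_ofFn_get_eq h
  exact ⟨.bagPerm as σ, rfl⟩

theorem exists_eseq_bag_cost_eq (C : Cost L DT τ) (S : Eseq τ T T') {s : Multiset (PreRLT L)}
    (has : as = T.toList + s) (hbs : bs = T'.toList + s) :
    ∃ S' : Eseq τ (some (.bag as)) (some (.bag bs)), S'.cost C = S.cost C := by
  obtain ⟨l, rfl⟩ : ∃ l : List (PreRLT L), s = l := ⟨_, s.coe_toList.symm⟩
  obtain ⟨p, hp⟩ := exists_estep_bag_of_perm C (Multiset.coe_eq_coe.1 has)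
  obtain ⟨q, hq⟩ := exists_estep_bag_of_perm C (Multiset.coe_eq_coe.1 hbs.symm)
  refine ⟨.cons (.inner p)
    ((S.lift _ (EstepO.inBag l)).append (.cons (.inner q) (.nil _))), ?_⟩
  simp [Eseq.cost, EstepO.cost, Eseq.cost_append, S.cost_lift_inBag, hp, hq]

theorem editDist_bag_le (C : Cost L DT τ) [Nonempty (Eseq τ T T')] {s : Multiset (PreRLT L)}
    (has : as = T.toList + s) (hbs : bs = T'.toList + s) :
    editDist C (some (.bag as)) (some (.bag bs)) ≤ editDist C T T' :=
  le_editDist fun S =>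
    have ⟨S', hS'⟩ := exists_eseq_bag_cost_eq C S has hbs
    (editDist_le_cost C S').trans_eq hS'

theorem nonempty_eseq_bag_and_editDist_le_matchCost (C : Cost L DT τ)
    (hM : ∀ p ∈ M, Nonempty (Eseq τ p.1 p.2)) {s : Multiset (PreRLT L)}
    (has : as = M.filterMap Prod.fst + s) (hbs : bs = M.filterMap Prod.snd + s) :
    Nonempty (Eseq τ (some (.bag as)) (some (.bag bs))) ∧
      editDist C (some (.bag as)) (some (.bag bs)) ≤ matchCost (editDist C) M := by
  induction M using Multiset.induction generalizing as s with
  | empty =>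
    obtain ⟨S, hS⟩ := exists_eseq_bag_cost_eq (τ := τ) C (.nil none) has hbs
    exact ⟨⟨S⟩, (editDist_le_cost C S).trans_eq hS⟩
  | cons p M ih =>
    obtain ⟨x, y⟩ := p
    obtain ⟨hxy, hM⟩ := Multiset.forall_mem_cons.1 hM
    rw [filterMap_cons_toList, add_assoc] at has
    rw [filterMap_cons_toList, add_assoc, add_left_comm] at hbs
    obtain ⟨cs, hcs⟩ : ∃ cs : List (PreRLT L),
        (cs : Multiset (PreRLT L)) = y.toList + (M.filterMap Prod.fst + s) :=
      ⟨_, Multiset.coe_toList _⟩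
    obtain ⟨hne, hle⟩ := ih hM (hcs.trans (add_left_comm _ _ _)) hbs
    have hne' : Nonempty (Eseq τ (some (.bag as)) (some (.bag cs))) :=
      hxy.map fun S => (exists_eseq_bag_cost_eq C S has hcs).choose
    refine ⟨hne'.map2 Eseq.append hne, ?_⟩
    calc editDist C (some (.bag as)) (some (.bag bs))
        ≤ editDist C (some (.bag as)) (some (.bag cs)) +
          editDist C (some (.bag cs)) (some (.bag bs)) := editDist_triangle C
      _ ≤ editDist C x y + matchCost (editDist C) M :=
        add_le_add (editDist_bag_le C has hcs) hle
      _ = matchCost (editDist C) ((x, y) ::ₘ M) := (matchCost_cons _ _ _ _).symm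

theorem IsMatching.editDist_bag_le_matchCost (C : Cost L DT τ) (hM : IsMatching M as bs)
    (h : ∀ p ∈ M, Nonempty (Eseq τ p.1 p.2)) :
    editDist C (some (.bag as)) (some (.bag bs)) ≤ matchCost (editDist C) M :=
  (nonempty_eseq_bag_and_editDist_le_matchCost C h (s := 0) (by simp [hM.filterMap_fst])
    (by simp [hM.filterMap_snd])).2

/-- The children of the root if this is a Bag node, and no children for all other trees. Only trees
with Bag root are of interest here, but an edit sequence may also pass through `Λ`. -/
def bagChildren : OTree L → Multiset (PreRLT L)
  | some (.bag cs) => cs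
  | _ => 0

theorem PreRLT.IsLeaf.bagChildren_eq_zero {t : PreRLT L} (h : t.IsLeaf) :
    bagChildren (some t) = 0 := by
  cases t with
  | value | obj => rfl
  | bag cs => exact congrArg _ h

theorem EstepO.bagChildren_eq_or_exists_child_step (C : Cost L DT τ) (s : EstepO τ T T') :
    bagChildren T = bagChildren T' ∨
      ∃ (x y : OTree L) (e : EstepO τ x y) (r : Multiset (PreRLT L)), e.cost C = s.cost C ∧
        bagChildren T = x.toList + r ∧ bagChildren T' = y.toList + r := by
  cases s with
  | delRoot t h => exact Or.inl h.bagChildren_eq_zero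
  | insRoot t h => exact Or.inl h.bagChildren_eq_zero.symm
  | inner e =>
    cases e with
    | relabel | objPerm | objCongr | objDel | objIns => exact Or.inl rfl
    | bagPerm cs σ =>
      have hperm := σ.ofFn_comp_perm cs.get
      rw [List.ofFn_get] at hperm
      exact Or.inl (Multiset.coe_eq_coe.2 hperm.symm)
    | bagCongr pre post e =>
      refine Or.inr ⟨_, _, .inner e, ↑(pre ++ post), rfl, ?_, ?_⟩ <;>
        exact Multiset.coe_eq_coe.2 List.perm_middle
    | bagDel cs t h => exact Or.inr ⟨_, _, .delRoot t h, cs, rfl, rfl, rfl⟩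
    | bagIns cs t h => exact Or.inr ⟨_, _, .insRoot t h, cs, rfl, rfl, rfl⟩

theorem Eseq.exists_isMatching (C : Cost L DT τ) (S : Eseq τ T T') :
    ∃ M, IsMatching M (bagChildren T) (bagChildren T') ∧
      (∀ p ∈ M, Nonempty (Eseq τ p.1 p.2)) ∧ matchCost (editDist C) M ≤ S.cost C := by
  induction S with
  | nil T =>
    refine ⟨(bagChildren T).map fun t => (some t, some t), ⟨?_, ?_⟩, ?_, ?_⟩
    · rw [Multiset.filterMap_map]
      exact Multiset.filterMap_some _
    · rw [Multiset.filterMap_map]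
      exact Multiset.filterMap_some _
    · simpa using fun t _ => ⟨.nil (some t)⟩
    · simp [matchCost, editDist_self, cost]
  | @cons T T' T'' s S ih =>
    obtain ⟨M, hM, hne, hle⟩ := ih
    rcases s.bagChildren_eq_or_exists_child_step C with h | ⟨x, y, e, r, he, hT, hT'⟩
    · exact ⟨M, h ▸ hM, hne, hle.trans (le_add_of_nonneg_left (s.cost_nonneg C))⟩
    rw [hT'] at hM
    obtain ⟨z, M, hM, hmem, hcost⟩ := hM.exists_cons_matchCost_eq (editDist_self C none)
    replace hne : ∀ p ∈ (y, z) ::ₘ M, Nonempty (Eseq τ p.1 p.2) := fun p hp =>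
      (hmem p hp).elim (hne p) fun h => h ▸ ⟨.nil none⟩
    obtain ⟨hyz, hne⟩ := Multiset.forall_mem_cons.1 hne
    have hxy : Nonempty (Eseq τ x y) := ⟨.cons e (.nil y)⟩
    obtain ⟨r', t', hM, hr, ht⟩ := IsMatching.cons_iff.1 hM
    obtain rfl := add_left_cancel hr
    refine ⟨(x, z) ::ₘ M, hT ▸ IsMatching.cons_iff.2 ⟨_, _, hM, rfl, ht⟩,
      Multiset.forall_mem_cons.2 ⟨hxy.map2 append hyz, hne⟩, ?_⟩
    have hxy_le : editDist C x y ≤ e.cost C :=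
      (editDist_le_cost C (.cons e (.nil y))).trans_eq (add_zero _)
    calc matchCost (editDist C) ((x, z) ::ₘ M)
        = editDist C x z + matchCost (editDist C) M := matchCost_cons _ _ _ _
      _ ≤ editDist C x y + editDist C y z + matchCost (editDist C) M := by
        gcongr
        exact editDist_triangle C
      _ ≤ e.cost C + (editDist C y z + matchCost (editDist C) M) := by
        rw [add_assoc]
        gcongr
      _ ≤ s.cost C + S.cost C := by
        rw [he, ← matchCost_cons, hcost]
        gcongr

end Bag

end TED

/-- for trees A, B whose roots are Bag nodes with children
subtrees A₁, …, A_m and B₁, …, B_n, and N = max(m, n), the edit distance is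
the minimum over permutations σ of {1, …, N} of Σᵢ Δ_{i, σ(i)}, where
Δ_{ij} = d(Aᵢ, Bⱼ) (with Aᵢ = Λ for i > m and Bⱼ = Λ for j > n, as produced by
the out-of-range list lookup `l[i]? = none`). -/
theorem editDist_bag_bag {L DT : Type} (τ : L → DT) (C : TED.Cost L DT τ)
    (as bs : List (TED.PreRLT L))
    (hA : (TED.PreRLT.bag as).WF) (hB : (TED.PreRLT.bag bs).WF) :
    TED.editDist C (some (TED.PreRLT.bag as)) (some (TED.PreRLT.bag bs))
      = ⨅ σ : Equiv.Perm (Fin (max as.length bs.length)),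
          ∑ i : Fin (max as.length bs.length),
            TED.editDist C as[(i : ℕ)]? bs[((σ i : Fin _) : ℕ)]? := by
  cases hA with | bag hA =>
  cases hB with | bag hB =>
  apply le_antisymm
  · refine le_ciInf fun σ => ?_
    have hσ := TED.IsMatching.of_perm (le_max_left as.length bs.length) (le_max_right _ _) σ
    refine (hσ.editDist_bag_le_matchCost C fun p hp => ?_).trans_eq (TED.matchCost_map_univ _ _)
    obtain ⟨i, -, rfl⟩ := Multiset.mem_map.1 hp
    exact (TED.wfo_getElem? hA i).nonempty_eseq (TED.wfo_getElem? hB (σ i))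
  · have : Nonempty (TED.Eseq τ (some (.bag as)) (some (.bag bs))) :=
      TED.WFO.nonempty_eseq (.bag hA) (.bag hB)
    refine TED.le_editDist fun S => ?_
    obtain ⟨M, hM, -, hle⟩ := S.exists_isMatching C
    obtain ⟨σ, hσ⟩ := hM.exists_perm_sum_le (TED.editDist_self C none)
      (fun a ha b hb => TED.WFO.editDist_le_add C (hA a ha) (hB b hb))
      (le_max_left _ _) (le_max_right _ _)
    exact (ciInf_le (Set.finite_range _).bddBelow σ).trans (hσ.trans hle)
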